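/- arXiv:2307.13769 — 2 statements merged into one kernel-verified Lean document; each statement's English description precedes it below -/
import Mathlib

section
/- Let d ≥ 2 be an integer and γ ∈ ℝ. For x ∈ ℝ^d with |x| ≠ 1, ∫_{S^{d-1}} |x - ω|^γ dω = 2 π^{d/2} Γ(d/2)^{-1} (1+|x|)^γ F(-γ/2, (d-1)/2; d-1; 4|x|/(1+|x|)²), where the integral is with respect to the surface measure on the unit sphere. -/
/-!
Fix a unit vector `e` with `x = ‖x‖ • e` and write `s = (1 + ⟪e, ω⟫) / 2 ∈ [0, 1]` for the height
of a point `ω` of the sphere above the pole `-e`. Since `|x - ω|² = (1 + |x|)² (1 - z s)` with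
`z = 4 |x| / (1 + |x|)² < 1`, the binomial series expands `|x - ω|^γ` in powers of `z s`, uniformly
in `ω`, and everything reduces to the moments `∫ sⁿ`.

If `F` is homogeneous of degree `k + 1`, integrating `∂ᵥF` against `exp (-|y|²)` by parts and
passing to polar coordinates gives `∫ ∂ᵥF = (d + k) ∫ ⟪v, ω⟫ F` over the sphere. For
`F y = |y|² (|y| + ⟪e, y⟫)ⁿ` and `v = e` both sides are combinations of the `n`-th and the
`(n + 1)`-st moment, which yields `(d - 1 + n) ∫ sⁿ⁺¹ = ((d - 1) / 2 + n) ∫ sⁿ`.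
-/

open Real Set MeasureTheory

/-- Pochhammer symbol (rising factorial) for a real argument. -/
noncomputable def poch (x : ℝ) (n : ℕ) : ℝ := ∏ i ∈ Finset.range n, (x + i)

/-- Gauss hypergeometric series. -/
noncomputable def hyperF (a b c z : ℝ) : ℝ :=
  ∑' n : ℕ, poch a n * poch b n / (poch c n * (n.factorial : ℝ)) * z ^ n

open Metric Module

section Pochhammer

lemma poch_succ (a : ℝ) (n : ℕ) : poch a (n + 1) = poch a n * (a + n) :=
  Finset.prod_range_succ _ _

lemma poch_pos {a : ℝ} (ha : 0 < a) (n : ℕ) : 0 < poch a n :=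
  Finset.prod_pos fun _ _ => by positivity

lemma poch_eq_ascPochhammer_eval (a : ℝ) (n : ℕ) : poch a n = (ascPochhammer ℝ n).eval a := by
  induction n with
  | zero => simp [poch]
  | succ n ih => rw [poch_succ, ascPochhammer_succ_eval, ih]

lemma poch_div_factorial (a : ℝ) (n : ℕ) :
    poch a n / (n.factorial : ℝ) = Ring.choose (a + n - 1) n := by
  rw [div_eq_iff (by positivity), ← Ring.multichoose_eq, mul_comm, ← nsmul_eq_mul,
    Ring.factorial_nsmul_multichoose_eq_ascPochhammer, Polynomial.ascPochhammer_smeval_eq_eval,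
    poch_eq_ascPochhammer_eval]

lemma hasSum_poch_div_factorial_mul_pow (a : ℝ) {u : ℝ} (hu : |u| < 1) :
    HasSum (fun n : ℕ => poch a n / (n.factorial : ℝ) * u ^ n) ((1 - u) ^ (-a)) := by
  have hu' : 0 ≤ 1 - u := by linarith [(abs_lt.1 hu).2]
  have h := (one_div_one_sub_rpow_hasFPowerSeriesOnBall_zero a).hasSum_sub (y := u)
    (by simpa [mem_eball, edist_dist, Real.dist_eq] using hu)
  simpa [poch_div_factorial, rpow_neg hu', FormalMultilinearSeries.ofScalars] using h

end Pochhammer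

lemma hasSum_mul_integral_pow {α : Type*} [MeasurableSpace α] {μ : Measure α} [IsFiniteMeasure μ]
    {s : α → ℝ} (hs : AEStronglyMeasurable s μ) (hs_le : ∀ x, |s x| ≤ 1) {a : ℕ → ℝ}
    (ha : Summable a) :
    HasSum (fun n => a n * ∫ x, s x ^ n ∂μ) (∫ x, ∑' n, a n * s x ^ n ∂μ) := by
  have norm_le (n : ℕ) (x : α) : ‖a n * s x ^ n‖ ≤ |a n| := by
    rw [norm_mul, norm_pow]
    exact mul_le_of_le_one_right (abs_nonneg _) (pow_le_one₀ (abs_nonneg _) (hs_le x))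
  have integrable (n : ℕ) : Integrable (fun x => a n * s x ^ n) μ :=
    (integrable_const |a n|).mono' ((hs.pow n).const_mul _) (.of_forall (norm_le n))
  have summable : Summable fun n => ∫ x, ‖a n * s x ^ n‖ ∂μ := by
    refine .of_nonneg_of_le (fun n => integral_nonneg fun x => norm_nonneg _) (fun n => ?_)
      (ha.abs.mul_left (μ.real univ))
    simpa using integral_mono (integrable n).norm (integrable_const _) (norm_le n)
  simpa only [integral_const_mul] using
    hasSum_integral_of_summable_integral_norm integrable summable

section Radial

lemma integral_volumeIoiPow (n : ℕ) (f : ℝ → ℝ) :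
    ∫ r, f r ∂Measure.volumeIoiPow n = ∫ r in Ioi (0 : ℝ), r ^ n * f r := by
  simp only [Measure.volumeIoiPow, ENNReal.ofReal]
  rw [integral_withDensity_eq_integral_smul (measurable_subtype_coe.pow_const _).real_toNNReal,
    integral_subtype_comap measurableSet_Ioi fun r : ℝ => Real.toNNReal (r ^ n) • f r]
  refine setIntegral_congr_fun measurableSet_Ioi fun r hr => ?_
  simp only [NNReal.smul_def, coe_toNNReal _ (pow_nonneg (le_of_lt hr.out) n), smul_eq_mul]

lemma integrableOn_pow_mul_exp_neg_sq (m : ℕ) :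
    IntegrableOn (fun r : ℝ => r ^ m * exp (-r ^ 2)) (Ioi 0) := by
  have hm : (-1 : ℝ) < m := by linarith [m.cast_nonneg (α := ℝ)]
  simpa using integrableOn_rpow_mul_exp_neg_rpow hm two_pos

lemma integral_pow_mul_exp_neg_sq (m : ℕ) :
    ∫ r in Ioi (0 : ℝ), r ^ m * exp (-r ^ 2) = Gamma ((m + 1) / 2) / 2 := by
  have hm : (-1 : ℝ) < m := by linarith [m.cast_nonneg (α := ℝ)]
  simpa [div_eq_inv_mul] using integral_rpow_mul_exp_neg_rpow two_pos hm

end Radial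

section Derivatives

variable {E : Type*} [NormedAddCommGroup E] [InnerProductSpace ℝ E]

lemma hasLineDerivAt_inner (e y v : E) :
    HasLineDerivAt ℝ (fun y : E => inner ℝ e y) (inner ℝ e v) y v :=
  (innerSL ℝ e).hasFDerivAt.hasLineDerivAt v

lemma hasLineDerivAt_norm_sq (y v : E) :
    HasLineDerivAt ℝ (fun y : E => ‖y‖ ^ 2) (2 * inner ℝ v y) y v := by
  simpa [real_inner_comm] using (hasStrictFDerivAt_norm_sq y).hasFDerivAt.hasLineDerivAt v

lemma hasLineDerivAt_norm_of_ne_zero {y : E} (hy : y ≠ 0) (v : E) :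
    HasLineDerivAt ℝ (fun y : E => ‖y‖) (inner ℝ v y / ‖y‖) y v := by
  have hsq : ‖y + (0 : ℝ) • v‖ ^ 2 ≠ 0 := by simpa using hy
  simpa [HasLineDerivAt, sqrt_sq, mul_div_mul_left] using
    HasDerivAt.sqrt (hasLineDerivAt_norm_sq y v) hsq

lemma hasLineDerivAt_gaussian (y v : E) :
    HasLineDerivAt ℝ (fun y : E => exp (-‖y‖ ^ 2)) (-2 * inner ℝ v y * exp (-‖y‖ ^ 2)) y v := by
  simpa [HasLineDerivAt, mul_comm, mul_left_comm] using
    (HasDerivAt.fun_neg (hasLineDerivAt_norm_sq y v)).exp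

end Derivatives

/-- `f` is positively homogeneous of degree `k`. Only dilations with `r > 0` are considered, so that
for `k = 0` the value `f 0` is unconstrained. -/
def PosHomogeneous {E : Type*} [SMul ℝ E] (f : E → ℝ) (k : ℕ) : Prop :=
  ∀ r : ℝ, 0 < r → ∀ y, f (r • y) = r ^ k * f y

namespace PosHomogeneous

section Module

variable {E : Type*} [AddCommGroup E] [Module ℝ E] {f g : E → ℝ} {k l : ℕ}

lemma mul (hf : PosHomogeneous f k) (hg : PosHomogeneous g l) :
    PosHomogeneous (fun y => f y * g y) (k + l) := fun r hr y => by
  simp only [hf r hr, hg r hr, pow_add, mul_mul_mul_comm]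

lemma of_hasLineDerivAt {v : E} (hf : PosHomogeneous f (k + 1))
    (hfg : ∀ y, HasLineDerivAt ℝ f (g y) y v) : PosHomogeneous g k := fun r hr y => by
  have h : HasDerivAt (fun t : ℝ => f (y + (r⁻¹ * t) • v)) (r⁻¹ * g y) 0 := by
    have hline : HasDerivAt (fun t => f (y + t • v)) (g y) (r⁻¹ * 0) := by
      simpa [HasLineDerivAt] using hfg y
    simpa [Function.comp_def, mul_comm] using
      hline.comp (0 : ℝ) ((hasDerivAt_id (0 : ℝ)).const_mul r⁻¹)
  have hscale (t : ℝ) : f (r • y + t • v) = r ^ (k + 1) * f (y + (r⁻¹ * t) • v) := by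
    rw [← hf r hr, smul_add, smul_smul, mul_inv_cancel_left₀ hr.ne']
  have hr_line := hfg (r • y)
  simp only [HasLineDerivAt, hscale] at hr_line
  rw [hr_line.unique (h.const_mul _), pow_succ, mul_assoc, mul_inv_cancel_left₀ hr.ne']

end Module

section NormedSpace

variable {E : Type*} [NormedAddCommGroup E] [NormedSpace ℝ E] {f : E → ℝ} {k : ℕ}

lemma eq_norm_pow_mul (hf : PosHomogeneous f k) {y : E} (hy : y ≠ 0) :
    f y = ‖y‖ ^ k * f (‖y‖⁻¹ • y) := by
  rw [← hf _ (norm_pos_iff.2 hy), smul_inv_smul₀ (norm_ne_zero_iff.2 hy)]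

variable [FiniteDimensional ℝ E]

lemma exists_abs_le_mul_norm_pow (hf : PosHomogeneous f k) (hfc : Continuous f) :
    ∃ C, ∀ y, y ≠ 0 → |f y| ≤ C * ‖y‖ ^ k := by
  obtain ⟨C, hC⟩ := (isCompact_sphere (0 : E) 1).exists_bound_of_continuousOn hfc.continuousOn
  refine ⟨C, fun y hy => ?_⟩
  have hunit : |f (‖y‖⁻¹ • y)| ≤ C := hC _ (by simp [norm_smul, hy])
  calc |f y| = ‖y‖ ^ k * |f (‖y‖⁻¹ • y)| := by
        rw [hf.eq_norm_pow_mul hy, abs_mul, abs_of_nonneg (by positivity)]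
    _ ≤ C * ‖y‖ ^ k := by rw [mul_comm]; gcongr

variable [Nontrivial E] [MeasurableSpace E] [BorelSpace E] (μ : Measure E) [μ.IsAddHaarMeasure]

theorem integral_mul_fun_norm (hf : PosHomogeneous f k) (w : ℝ → ℝ) :
    ∫ y, f y * w ‖y‖ ∂μ = (∫ ω : sphere (0 : E) 1, f ω ∂μ.toSphere) *
      ∫ r in Ioi (0 : ℝ), r ^ (finrank ℝ E - 1 + k) * w r :=
  calc
    ∫ y, f y * w ‖y‖ ∂μ = ∫ y : ({0}ᶜ : Set E), f y * w ‖(y : E)‖ ∂μ.comap (↑) := by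
      rw [integral_subtype_comap (measurableSet_singleton _).compl fun y : E => f y * w ‖y‖,
        restrict_compl_singleton]
    _ = ∫ p, f p.1 * ((p.2 : ℝ) ^ k * w p.2)
          ∂μ.toSphere.prod (.volumeIoiPow (finrank ℝ E - 1)) := by
      rw [← μ.measurePreserving_homeomorphUnitSphereProd.integral_comp
        (Homeomorph.measurableEmbedding _)]
      refine integral_congr_ae (.of_forall fun y => ?_)
      simp only [homeomorphUnitSphereProd_apply_snd_coe, homeomorphUnitSphereProd_apply_fst_coe]
      rw [hf.eq_norm_pow_mul y.2]
      ring
    _ = _ := by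
      rw [integral_prod_mul (fun ω : sphere (0 : E) 1 => f ω)
        (fun r : Ioi (0 : ℝ) => (r : ℝ) ^ k * w r), integral_volumeIoiPow _ fun r => r ^ k * w r]
      simp only [pow_add, mul_assoc]

lemma integral_mul_gaussian (hf : PosHomogeneous f k) :
    ∫ y, f y * exp (-‖y‖ ^ 2) ∂μ =
      (∫ ω : sphere (0 : E) 1, f ω ∂μ.toSphere) * (Gamma ((finrank ℝ E + k) / 2) / 2) := by
  have hd : ((finrank ℝ E - 1 : ℕ) : ℝ) = finrank ℝ E - 1 := Nat.cast_pred finrank_pos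
  rw [hf.integral_mul_fun_norm μ fun r => exp (-r ^ 2), integral_pow_mul_exp_neg_sq, Nat.cast_add,
    hd]
  ring_nf

lemma integrable_mul_gaussian (hf : PosHomogeneous f k) (hfc : Continuous f) :
    Integrable (fun y => f y * exp (-‖y‖ ^ 2)) μ := by
  obtain ⟨C, hC⟩ := hf.exists_abs_le_mul_norm_pow hfc
  have hdom : Integrable (fun y : E => ‖y‖ ^ k * exp (-‖y‖ ^ 2)) μ := by
    refine (integrable_fun_norm_addHaar μ (f := fun r : ℝ => r ^ k * exp (-r ^ 2))).2 ?_
    simpa [← mul_assoc, ← pow_add] using integrableOn_pow_mul_exp_neg_sq (finrank ℝ E - 1 + k)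
  refine (hdom.const_mul C).mono' (by fun_prop) ?_
  filter_upwards [compl_mem_ae_iff.2 (measure_singleton (0 : E))] with y hy
  rw [norm_mul, norm_eq_abs, norm_eq_abs, abs_exp, ← mul_assoc]
  gcongr
  exact hC y hy

end NormedSpace

section InnerProductSpace

variable {E : Type*} [NormedAddCommGroup E] [InnerProductSpace ℝ E] {f g : E → ℝ} {k : ℕ}

lemma inner_left (v : E) : PosHomogeneous (fun y => inner ℝ v y) 1 := fun r _ y => by
  simp [inner_smul_right]

variable [FiniteDimensional ℝ E] [Nontrivial E] [MeasurableSpace E] [BorelSpace E]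
  (μ : Measure E) [μ.IsAddHaarMeasure]

theorem integral_lineDeriv_sphere (hf : PosHomogeneous f (k + 1)) (hfc : Continuous f)
    (hgc : Continuous g) {v : E} (hfg : ∀ y, HasLineDerivAt ℝ f (g y) y v) :
    ∫ ω : sphere (0 : E) 1, g ω ∂μ.toSphere =
      (finrank ℝ E + k) * ∫ ω : sphere (0 : E) 1, inner ℝ v (ω : E) * f ω ∂μ.toSphere := by
  have hg : PosHomogeneous g k := hf.of_hasLineDerivAt hfg
  have hvf : PosHomogeneous (fun y => inner ℝ v y * f y) (1 + (k + 1)) := (inner_left v).mul hf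
  have parts : 2 * ∫ y, inner ℝ v y * f y * exp (-‖y‖ ^ 2) ∂μ =
      ∫ y, g y * exp (-‖y‖ ^ 2) ∂μ := by
    have hmul (y : E) : f y * (-2 * inner ℝ v y * exp (-‖y‖ ^ 2)) =
        -2 * (inner ℝ v y * f y * exp (-‖y‖ ^ 2)) := by ring
    have h := integral_bilinear_hasLineDerivAt_right_eq_neg_left_of_integrable
      (μ := μ) (B := ContinuousLinearMap.mul ℝ ℝ) (hg.integrable_mul_gaussian μ hgc)
      (by simpa only [ContinuousLinearMap.mul_apply', hmul] using
        (hvf.integrable_mul_gaussian μ (by fun_prop)).const_mul (-2))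
      (hf.integrable_mul_gaussian μ hfc) (fun y _ => hfg y)
      (fun y _ => hasLineDerivAt_gaussian y v)
    simp only [ContinuousLinearMap.mul_apply', hmul, integral_const_mul] at h
    linarith
  have hd : (0 : ℝ) < (finrank ℝ E + k) / 2 := by
    have : (0 : ℝ) < finrank ℝ E := mod_cast finrank_pos
    positivity
  have hGamma : Gamma ((finrank ℝ E + (1 + (k + 1) : ℕ)) / 2) =
      (finrank ℝ E + k) / 2 * Gamma ((finrank ℝ E + k) / 2) := by
    rw [← Gamma_add_one hd.ne']
    push_cast
    ring_nf
  rw [hg.integral_mul_gaussian μ, hvf.integral_mul_gaussian μ, hGamma] at parts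
  refine mul_right_cancel₀ (Gamma_pos_of_pos hd).ne' ?_
  linarith

end InnerProductSpace

end PosHomogeneous

section PoleHeight

variable {E : Type*} [NormedAddCommGroup E] [InnerProductSpace ℝ E] {e : E}

/-- The height of a point of the unit sphere above the pole `-e`, rescaled to range over `[0, 1]`
when `e` is a unit vector. -/
noncomputable def poleHeight (e y : E) : ℝ := (1 + inner ℝ e y) / 2

lemma continuous_poleHeight (e : E) : Continuous (poleHeight e) := by
  unfold poleHeight
  fun_prop

lemma poleHeight_mem_Icc (he : ‖e‖ = 1) (ω : sphere (0 : E) 1) :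
    poleHeight e ω ∈ Icc (0 : ℝ) 1 := by
  have h := abs_real_inner_le_norm e (ω : E)
  rw [he, norm_eq_of_mem_sphere, one_mul, abs_le] at h
  unfold poleHeight
  constructor <;> linarith [h.1, h.2]

/-- The factor `‖y‖ ^ 2` makes the function differentiable at the origin. -/
lemma hasLineDerivAt_norm_sq_mul_norm_add_inner_pow (he : ‖e‖ = 1) (n : ℕ) (y : E) :
    HasLineDerivAt ℝ (fun y => ‖y‖ ^ 2 * (‖y‖ + inner ℝ e y) ^ n)
      ((n * ‖y‖ + 2 * inner ℝ e y) * (‖y‖ + inner ℝ e y) ^ n) y e := by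
  rcases eq_or_ne y 0 with rfl | hy
  · have hbounded : (fun y : E => (‖y‖ + inner ℝ e y) ^ n) =O[nhds 0] fun _ => (1 : ℝ) :=
      (Continuous.tendsto (by fun_prop) 0).isBigO_one ℝ
    have hsmall : (fun y : E => ‖y‖ ^ 2 * (‖y‖ + inner ℝ e y) ^ n) =O[nhds 0]
        fun y => ‖y - 0‖ ^ 2 := by
      simpa using (Asymptotics.isBigO_refl (fun y : E => ‖y‖ ^ 2) (nhds 0)).mul hbounded
    simpa using (hsmall.hasFDerivAt one_lt_two).hasLineDerivAt e
  · have hy' : ‖y‖ ≠ 0 := norm_ne_zero_iff.2 hy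
    have hee : inner ℝ e e = 1 := by simp [he]
    have hbase := HasDerivAt.fun_add (hasLineDerivAt_norm_of_ne_zero hy e)
      (hasLineDerivAt_inner e y e)
    refine (HasDerivAt.fun_mul (hasLineDerivAt_norm_sq y e) (hbase.fun_pow n)).congr_deriv ?_
    simp only [zero_smul, add_zero, hee]
    rcases n with _ | n
    · simp
    · rw [Nat.add_sub_cancel]
      field_simp
      ring

lemma posHomogeneous_norm_sq_mul_norm_add_inner_pow (e : E) (n : ℕ) :
    PosHomogeneous (fun y => ‖y‖ ^ 2 * (‖y‖ + inner ℝ e y) ^ n) (n + 1 + 1) := fun r hr y => by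
  simp only [norm_smul, norm_of_nonneg hr.le, inner_smul_right, ← mul_add, mul_pow]
  ring

variable [FiniteDimensional ℝ E] [MeasurableSpace E] [BorelSpace E]
  (μ : Measure E) [μ.IsAddHaarMeasure]

lemma integrable_poleHeight_pow (e : E) (n : ℕ) :
    Integrable (fun ω : sphere (0 : E) 1 => poleHeight e ω ^ n) μ.toSphere :=
  (((continuous_poleHeight e).comp continuous_subtype_val).pow n).integrable_of_hasCompactSupport
    (.of_compactSpace _)

theorem integral_poleHeight_pow_succ [Nontrivial E] (he : ‖e‖ = 1) (n : ℕ) :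
    ((finrank ℝ E : ℝ) - 1 + n) * ∫ ω : sphere (0 : E) 1, poleHeight e ω ^ (n + 1) ∂μ.toSphere =
      (((finrank ℝ E : ℝ) - 1) / 2 + n) *
        ∫ ω : sphere (0 : E) 1, poleHeight e ω ^ n ∂μ.toSphere := by
  have hinner (ω : E) : inner ℝ e ω = 2 * poleHeight e ω - 1 := by
    unfold poleHeight
    ring
  have h := (posHomogeneous_norm_sq_mul_norm_add_inner_pow e n).integral_lineDeriv_sphere μ
    (by fun_prop) (by fun_prop) (hasLineDerivAt_norm_sq_mul_norm_add_inner_pow he n)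
  have hleft (ω : sphere (0 : E) 1) :
      (n * ‖(ω : E)‖ + 2 * inner ℝ e (ω : E)) * (‖(ω : E)‖ + inner ℝ e (ω : E)) ^ n =
        2 ^ n * ((n - 2) * poleHeight e ω ^ n + 4 * poleHeight e ω ^ (n + 1)) := by
    rw [norm_eq_of_mem_sphere, hinner, add_sub_cancel, mul_pow]
    ring
  have hright (ω : sphere (0 : E) 1) :
      inner ℝ e (ω : E) * (‖(ω : E)‖ ^ 2 * (‖(ω : E)‖ + inner ℝ e (ω : E)) ^ n) =
        2 ^ n * (2 * poleHeight e ω ^ (n + 1) - poleHeight e ω ^ n) := by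
    rw [norm_eq_of_mem_sphere, hinner, add_sub_cancel, mul_pow]
    ring
  have hint := integrable_poleHeight_pow μ e
  simp only [hleft, hright] at h
  rw [integral_const_mul, integral_const_mul,
    integral_add ((hint n).const_mul _) ((hint (n + 1)).const_mul _),
    integral_sub ((hint (n + 1)).const_mul _) (hint n),
    integral_const_mul, integral_const_mul, integral_const_mul, mul_left_comm] at h
  have h' := mul_left_cancel₀ (by positivity) h
  push_cast at h'
  linarith

theorem integral_poleHeight_pow (hd : 2 ≤ finrank ℝ E) (he : ‖e‖ = 1) (n : ℕ) :
    ∫ ω : sphere (0 : E) 1, poleHeight e ω ^ n ∂μ.toSphere =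
      μ.toSphere.real univ *
        (poch (((finrank ℝ E : ℝ) - 1) / 2) n / poch ((finrank ℝ E : ℝ) - 1) n) := by
  have : Nontrivial E := nontrivial_of_finrank_pos (R := ℝ) (by lia)
  have hd' : (0 : ℝ) < (finrank ℝ E : ℝ) - 1 := by
    have : (2 : ℝ) ≤ finrank ℝ E := mod_cast hd
    linarith
  induction n with
  | zero => simp [poch]
  | succ n ih =>
    have hpoch := (poch_pos hd' n).ne'
    have hfactor : (finrank ℝ E : ℝ) - 1 + n ≠ 0 := by positivity
    refine mul_left_cancel₀ hfactor ?_
    rw [integral_poleHeight_pow_succ μ he, ih, poch_succ, poch_succ]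
    field_simp

end PoleHeight

section Potential

variable {E : Type*} [NormedAddCommGroup E] [InnerProductSpace ℝ E]

lemma exists_norm_eq_one_norm_smul_eq [Nontrivial E] (x : E) : ∃ e : E, ‖e‖ = 1 ∧ ‖x‖ • e = x := by
  rcases eq_or_ne x 0 with rfl | hx
  · obtain ⟨e, he⟩ := exists_norm_eq E zero_le_one
    exact ⟨e, he, by simp⟩
  · exact ⟨‖x‖⁻¹ • x, by simp [norm_smul, hx], smul_inv_smul₀ (norm_ne_zero_iff.2 hx) x⟩

lemma four_mul_div_one_add_sq_mem_Ico {r : ℝ} (hr : 0 ≤ r) (hr1 : r ≠ 1) :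
    4 * r / (1 + r) ^ 2 ∈ Ico (0 : ℝ) 1 := by
  have hgap : 0 < (1 - r) ^ 2 := sq_pos_of_ne_zero (sub_ne_zero.2 hr1.symm)
  refine ⟨by positivity, (div_lt_one (by positivity)).2 ?_⟩
  linarith

lemma norm_smul_sub_sq (e : E) {r : ℝ} (he : ‖e‖ = 1) (hr : 1 + r ≠ 0) (ω : sphere (0 : E) 1) :
    ‖r • e - ω‖ ^ 2 = (1 + r) ^ 2 * (1 - 4 * r / (1 + r) ^ 2 * poleHeight e ω) := by
  rw [norm_sub_sq_real, norm_smul, norm_eq_of_mem_sphere, he, real_inner_smul_left, poleHeight,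
    mul_one, norm_eq_abs, sq_abs]
  field_simp
  ring

lemma norm_smul_sub_rpow (γ : ℝ) {e : E} {r : ℝ} (he : ‖e‖ = 1) (hr : 0 ≤ r)
    (ω : sphere (0 : E) 1) :
    ‖r • e - ω‖ ^ γ =
      (1 + r) ^ γ * (1 - 4 * r / (1 + r) ^ 2 * poleHeight e ω) ^ (γ / 2) := by
  have rpow_eq_sq_rpow {a : ℝ} (ha : 0 ≤ a) : a ^ γ = (a ^ 2) ^ (γ / 2) := by
    rw [← rpow_natCast_mul ha]
    congr 1
    push_cast
    ring
  have hr1 : 0 < 1 + r := by positivity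
  have hsq := norm_smul_sub_sq e he hr1.ne' ω
  have hnonneg : 0 ≤ 1 - 4 * r / (1 + r) ^ 2 * poleHeight e ω :=
    nonneg_of_mul_nonneg_right (hsq ▸ sq_nonneg _) (by positivity)
  rw [rpow_eq_sq_rpow (norm_nonneg _), hsq, mul_rpow (by positivity) hnonneg,
    ← rpow_eq_sq_rpow hr1.le]

lemma hasSum_norm_smul_sub_rpow (γ : ℝ) {e : E} {r : ℝ} (he : ‖e‖ = 1) (hr : 0 ≤ r) (hr1 : r ≠ 1)
    (ω : sphere (0 : E) 1) :
    HasSum (fun n : ℕ => (1 + r) ^ γ * (poch (-γ / 2) n / (n.factorial : ℝ) *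
      (4 * r / (1 + r) ^ 2) ^ n) * poleHeight e ω ^ n) (‖r • e - ω‖ ^ γ) := by
  obtain ⟨hz0, hz1⟩ := four_mul_div_one_add_sq_mem_Ico hr hr1
  obtain ⟨hs0, hs1⟩ := poleHeight_mem_Icc he ω
  have hzs : |4 * r / (1 + r) ^ 2 * poleHeight e ω| < 1 := by
    rw [abs_of_nonneg (mul_nonneg hz0 hs0)]
    exact mul_lt_one_of_nonneg_of_lt_one_left hz0 hz1 hs1
  have h := (hasSum_poch_div_factorial_mul_pow (-γ / 2) hzs).mul_left ((1 + r) ^ γ)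
  simpa only [norm_smul_sub_rpow γ he hr, mul_pow, mul_assoc, neg_div, neg_neg] using h

variable [FiniteDimensional ℝ E] [MeasurableSpace E] [BorelSpace E]

theorem integral_sphere_norm_sub_rpow (μ : Measure E) [μ.IsAddHaarMeasure]
    (hd : 2 ≤ finrank ℝ E) (γ : ℝ) (x : E) (hx : ‖x‖ ≠ 1) :
    ∫ ω : sphere (0 : E) 1, ‖x - ω‖ ^ γ ∂μ.toSphere =
      μ.toSphere.real univ * (1 + ‖x‖) ^ γ *
        hyperF (-γ / 2) (((finrank ℝ E : ℝ) - 1) / 2) ((finrank ℝ E : ℝ) - 1)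
          (4 * ‖x‖ / (1 + ‖x‖) ^ 2) := by
  have : Nontrivial E := nontrivial_of_finrank_pos (R := ℝ) (by lia)
  obtain ⟨e, he, hxe⟩ := exists_norm_eq_one_norm_smul_eq x
  obtain ⟨hz0, hz1⟩ := four_mul_div_one_add_sq_mem_Ico (norm_nonneg x) hx
  set z := 4 * ‖x‖ / (1 + ‖x‖) ^ 2
  have expansion (ω : sphere (0 : E) 1) :
      HasSum (fun n : ℕ => (1 + ‖x‖) ^ γ * (poch (-γ / 2) n / (n.factorial : ℝ) * z ^ n) *
        poleHeight e ω ^ n) (‖x - ω‖ ^ γ) := by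
    simpa only [hxe] using hasSum_norm_smul_sub_rpow γ he (norm_nonneg x) hx ω
  have coeff_summable := (hasSum_poch_div_factorial_mul_pow (-γ / 2)
    (abs_lt.2 ⟨by linarith, hz1⟩)).summable.mul_left ((1 + ‖x‖) ^ γ)
  have height_le (ω : sphere (0 : E) 1) : |poleHeight e ω| ≤ 1 :=
    abs_le.2 ⟨by linarith [(poleHeight_mem_Icc he ω).1], (poleHeight_mem_Icc he ω).2⟩
  have h := hasSum_mul_integral_pow (μ := μ.toSphere)
    ((continuous_poleHeight e).comp continuous_subtype_val).aestronglyMeasurable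
    height_le coeff_summable
  simp only [Function.comp_apply, fun ω => (expansion ω).tsum_eq, integral_poleHeight_pow μ hd he]
    at h
  rw [← h.tsum_eq, hyperF, ← tsum_mul_left]
  refine tsum_congr fun n => ?_
  field_simp

lemma volume_toSphere_real_univ [Nontrivial E] :
    (volume : Measure E).toSphere.real univ =
      2 * π ^ ((finrank ℝ E : ℝ) / 2) / Gamma ((finrank ℝ E : ℝ) / 2) := by
  have hd : (0 : ℝ) < finrank ℝ E := mod_cast finrank_pos
  have hd2 : (finrank ℝ E : ℝ) / 2 ≠ 0 := by positivity
  have hpi : √π ^ finrank ℝ E = π ^ ((finrank ℝ E : ℝ) / 2) := by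
    rw [sqrt_eq_rpow, ← rpow_mul_natCast pi_nonneg, one_div_mul_eq_div]
  have hGamma := (Gamma_pos_of_pos (half_pos hd)).ne'
  rw [Measure.toSphere_real_apply_univ, measureReal_def, InnerProductSpace.volume_ball,
    Gamma_add_one hd2, hpi, ENNReal.ofReal_one, one_pow, one_mul,
    ENNReal.toReal_ofReal (by positivity)]
  field_simp

theorem sphere_potential_eq_general (hd : 2 ≤ finrank ℝ E) (γ : ℝ) (x : E) (hx : ‖x‖ ≠ 1) :
    ∫ ω : sphere (0 : E) 1, ‖x - ω‖ ^ γ ∂(volume.toSphere) =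
      2 * π ^ ((finrank ℝ E : ℝ) / 2) / Gamma ((finrank ℝ E : ℝ) / 2) * (1 + ‖x‖) ^ γ *
        hyperF (-γ / 2) (((finrank ℝ E : ℝ) - 1) / 2) ((finrank ℝ E : ℝ) - 1)
          (4 * ‖x‖ / (1 + ‖x‖) ^ 2) := by
  have : Nontrivial E := nontrivial_of_finrank_pos (R := ℝ) (by lia)
  rw [integral_sphere_norm_sub_rpow volume hd γ x hx, volume_toSphere_real_univ]

end Potential

theorem sphere_potential_eq (d : ℕ) (hd : 2 ≤ d) (γ : ℝ)
    (x : EuclideanSpace ℝ (Fin d)) (hx : ‖x‖ ≠ 1) :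
    ∫ ω : Metric.sphere (0 : EuclideanSpace ℝ (Fin d)) 1,
        ‖x - (ω : EuclideanSpace ℝ (Fin d))‖ ^ γ ∂(volume.toSphere) =
      2 * Real.pi ^ ((d : ℝ) / 2) / Real.Gamma ((d : ℝ) / 2) * (1 + ‖x‖) ^ γ *
        hyperF (-γ / 2) (((d : ℝ) - 1) / 2) ((d : ℝ) - 1)
          (4 * ‖x‖ / (1 + ‖x‖) ^ 2) := by
  simpa using sphere_potential_eq_general (by simpa using hd) γ x hx
end

section
/- Let d ≥ 2 and γ ∈ ℝ with d + γ > 2. Define ψ_γ(ρ) = F(-γ/2, (2-γ-d)/2; d/2; ρ) for 0 ≤ ρ < 1 and ψ_γ(ρ) = ρ^{γ/2} F(-γ/2, (2-γ-d)/2; d/2; ρ^{-1}) for ρ > 1. Then ψ_γ extends to a continuously differentiable function on [0,∞) with ψ_γ(1) = Γ(d/2)Γ(d+γ-1)/(Γ((d+γ)/2)Γ((2d+γ-2)/2)) and ψ_γ'(1) = (γ/2)·Γ(d/2)Γ(d+γ-2)/(Γ((d+γ-2)/2)Γ((2d+γ-2)/2)). -/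
open Real Set MeasureTheory

/-! Write `F = ₂F₁ a b c` with `a = -γ / 2`, `b = (2 - γ - d) / 2`, `c = d / 2`. Gluing `F ρ` on
`[0, 1)` to `ρ ^ (-a) * F (1 / ρ)` on `(1, ∞)` gives a `C¹` function as soon as `F` is `C¹` up to
`1`, which holds because `c - a - b > 1`, and `F' 1 = -a * F 1 - F' 1`. By Gauss's summation
theorem, `F' 1 = a * b / c * ₂F₁ (a + 1) (b + 1) (c + 1) 1 = a * b / (c - a - b - 1) * F 1`,
and `c = a - b + 1` turns the last expression into `-a / 2 * F 1`, so the derivatives match.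

Gauss's theorem itself comes from the contiguous relation
`(c - a - b) * ₂F₁ a b c 1 = (c - a) * (c - b) / c * ₂F₁ a b (c + 1) 1`: as it is iterated,
`₂F₁ a b (c + n) 1` tends to `1`, and the accumulated Pochhammer symbols form Euler's limit for
`Γ`. -/

open Filter Topology Asymptotics

section Summability

lemma summable_of_eventually_le_sub_succ {f g : ℕ → ℝ} (hf : ∀ n, 0 ≤ f n) (hg : ∀ n, 0 ≤ g n)
    (hfg : ∀ᶠ n in atTop, f n ≤ g n - g (n + 1)) : Summable f := by
  obtain ⟨N, hN⟩ := eventually_atTop.1 hfg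
  rw [← summable_nat_add_iff N]
  refine summable_of_sum_range_le (c := g N) (fun n => hf _) fun m => ?_
  calc ∑ n ∈ Finset.range m, f (n + N)
      ≤ ∑ n ∈ Finset.range m, (g (n + N) - g (n + 1 + N)) :=
        Finset.sum_le_sum fun n _ => by simpa only [add_right_comm] using hN (n + N) (by lia)
    _ = g N - g (m + N) := by
        rw [Finset.sum_range_sub' fun n => g (n + N), zero_add]
    _ ≤ g N := sub_le_self _ (hg _)

lemma eq_zero_of_summable_of_tendsto_natCast_mul {f : ℕ → ℝ} {L : ℝ} (hf : Summable f)
    (hL : Tendsto (fun n : ℕ => n * f n) atTop (𝓝 L)) : L = 0 := by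
  by_contra hL0
  have hinv : (fun n : ℕ => (n * f n)⁻¹) =O[atTop] fun _ => (1 : ℝ) :=
    (hL.inv₀ hL0).isBigO_one ℝ
  have hharmonic : (fun n : ℕ => (n : ℝ)⁻¹) =O[atTop] f := by
    refine ((isBigO_refl f atTop).mul hinv).congr' ?_ (by simp)
    filter_upwards [hL.eventually_ne hL0] with n hn
    have := right_ne_zero_of_mul hn
    field_simp
  exact Real.not_summable_natCast_inv (summable_of_isBigO_nat' hf hharmonic)

end Summability

section Coefficients

lemma ascPochhammer_eval_eq_prod_range {R : Type*} [CommSemiring R] (n : ℕ) (x : R) :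
    (ascPochhammer R n).eval x = ∏ i ∈ Finset.range n, (x + i) := by
  induction n with
  | zero => simp
  | succ n ih => rw [ascPochhammer_succ_eval, ih, Finset.prod_range_succ]

lemma ascPochhammer_eval_succ_left {R : Type*} [CommSemiring R] (n : ℕ) (x : R) :
    (ascPochhammer R (n + 1)).eval x = x * (ascPochhammer R n).eval (x + 1) := by
  simp [ascPochhammer_succ_left]

lemma ascPochhammer_eval_ne_zero {R : Type*} [CommRing R] [IsDomain R] {x : R}
    (hx : ∀ n : ℕ, x ≠ -n) (n : ℕ) : (ascPochhammer R n).eval x ≠ 0 := by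
  rw [Ne, ascPochhammer_eval_eq_zero_iff]
  rintro ⟨k, -, hk⟩
  exact hx k (by rw [hk, neg_neg])

lemma monotoneOn_ascPochhammer_eval (n : ℕ) :
    MonotoneOn (fun x : ℝ => (ascPochhammer ℝ n).eval x) (Ioi 0) := by
  induction n with
  | zero => simpa using monotoneOn_const
  | succ n ih =>
    intro x hx y hy hxy
    simp only [ascPochhammer_succ_eval]
    rw [mem_Ioi] at hx
    gcongr
    · exact (ascPochhammer_pos n y hy).le
    · exact ih hx hy hxy

variable {𝕂 : Type*} [Field 𝕂] (a b : 𝕂) {c : 𝕂} (n : ℕ)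

lemma ordinaryHypergeometricCoefficient_add_one_right (hc : ∀ k : ℕ, c ≠ -k) :
    ordinaryHypergeometricCoefficient a b (c + 1) n =
      ordinaryHypergeometricCoefficient a b c n * (c / (c + n)) := by
  have hc0 : c ≠ 0 := by simpa using hc 0
  have hcn : c + n ≠ 0 := fun h => hc n (eq_neg_of_add_eq_zero_left h)
  have hpoch : c * (ascPochhammer 𝕂 n).eval (c + 1) = (ascPochhammer 𝕂 n).eval c * (c + n) := by
    rw [← ascPochhammer_eval_succ_left, ascPochhammer_succ_eval]
  have hpoch_succ : (ascPochhammer 𝕂 n).eval (c + 1) =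
      (ascPochhammer 𝕂 n).eval c * (c + n) / c := by
    rw [← hpoch, mul_div_cancel_left₀ _ hc0]
  simp only [ordinaryHypergeometricCoefficient, hpoch_succ]
  field_simp

variable [CharZero 𝕂]

lemma ordinaryHypergeometricCoefficient_succ (c : 𝕂) :
    (n + 1) * ordinaryHypergeometricCoefficient a b c (n + 1) =
      ordinaryHypergeometricCoefficient a b c n * ((a + n) * (b + n) / (c + n)) := by
  have hn : (n : 𝕂) + 1 ≠ 0 := n.cast_add_one_ne_zero
  simp only [ordinaryHypergeometricCoefficient, ascPochhammer_succ_eval, Nat.factorial_succ,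
    Nat.cast_mul, Nat.cast_add_one, mul_inv]
  field_simp

lemma ordinaryHypergeometricCoefficient_succ_eq_shift (c : 𝕂) :
    (n + 1) * ordinaryHypergeometricCoefficient a b c (n + 1) =
      a * b / c * ordinaryHypergeometricCoefficient (a + 1) (b + 1) (c + 1) n := by
  have hn : (n : 𝕂) + 1 ≠ 0 := n.cast_add_one_ne_zero
  simp only [ordinaryHypergeometricCoefficient, ascPochhammer_eval_succ_left, Nat.factorial_succ,
    Nat.cast_mul, Nat.cast_add_one, mul_inv]
  field_simp

lemma ordinaryHypergeometricCoefficient_telescope (hc : ∀ k : ℕ, c ≠ -k) :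
    (c - a - b) * ordinaryHypergeometricCoefficient a b c n -
        (c - a) * (c - b) / c * ordinaryHypergeometricCoefficient a b (c + 1) n =
      n * ordinaryHypergeometricCoefficient a b c n -
        (n + 1) * ordinaryHypergeometricCoefficient a b c (n + 1) := by
  have hc0 : c ≠ 0 := by simpa using hc 0
  have hcn : c + n ≠ 0 := fun h => hc n (eq_neg_of_add_eq_zero_left h)
  rw [ordinaryHypergeometricCoefficient_succ,
    ordinaryHypergeometricCoefficient_add_one_right _ _ _ hc]
  generalize ordinaryHypergeometricCoefficient a b c n = u
  field_simp
  ring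

end Coefficients

section UnitDisc

variable {𝕂 : Type*} [RCLike 𝕂] (a b c : 𝕂)

lemma one_le_radius_ordinaryHypergeometricSeries :
    1 ≤ (ordinaryHypergeometricSeries 𝕂 a b c).radius := by
  by_cases h : ∀ k : ℕ, ↑k ≠ -a ∧ ↑k ≠ -b ∧ ↑k ≠ -c
  · exact (ordinaryHypergeometricSeries_radius_eq_one 𝕂 a b c h).ge
  · obtain ⟨k, hk⟩ := not_forall.1 h
    have hpole : a = -k ∨ b = -k ∨ c = -k := by
      simp only [eq_neg_iff_add_eq_zero, add_comm _ (k : 𝕂), Ne] at hk ⊢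
      tauto
    rcases hpole with rfl | rfl | rfl
    · simp [ordinaryHypergeometric_radius_top_of_neg_nat₁]
    · simp [ordinaryHypergeometric_radius_top_of_neg_nat₂]
    · simp [ordinaryHypergeometric_radius_top_of_neg_nat₃]

lemma hasDerivAt_ordinaryHypergeometric {x : 𝕂} (hx : ‖x‖ < 1) :
    HasDerivAt (₂F₁ a b c) (a * b / c * ₂F₁ (a + 1) (b + 1) (c + 1) x) x := by
  set p := ordinaryHypergeometricSeries 𝕂 a b c
  have hradius : 1 ≤ p.radius := one_le_radius_ordinaryHypergeometricSeries a b c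
  have hball : x ∈ Metric.eball 0 p.radius := by
    rw [Metric.mem_eball, edist_zero_right, ← ofReal_norm]
    exact (ENNReal.ofReal_lt_one.2 hx).trans_le hradius
  have hseries : HasFPowerSeriesOnBall (₂F₁ a b c) p 0 p.radius :=
    p.hasFPowerSeriesOnBall (one_pos.trans_le hradius)
  have hdiff : DifferentiableAt 𝕂 (₂F₁ a b c) x :=
    (hseries.analyticAt_of_mem hball).differentiableAt
  have hsum := (hseries.fderiv.hasSum hball).mapL (ContinuousLinearMap.apply 𝕂 𝕂 (1 : 𝕂))
  have hterm (n : ℕ) : p.derivSeries n (fun _ => x) 1 =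
      a * b / c * (ordinaryHypergeometricCoefficient (a + 1) (b + 1) (c + 1) n * x ^ n) := by
    have hcoeff : p.coeff (n + 1) = ordinaryHypergeometricCoefficient a b c (n + 1) :=
      FormalMultilinearSeries.coeff_ofScalars
    rw [FormalMultilinearSeries.apply_eq_pow_smul_coeff, smul_apply,
      FormalMultilinearSeries.derivSeries_coeff_one, hcoeff, smul_eq_mul, nsmul_eq_mul,
      Nat.cast_add_one, ordinaryHypergeometricCoefficient_succ_eq_shift]
    ring
  simp only [zero_add, ContinuousLinearMap.apply_apply, hterm, fderiv_apply_one_eq_deriv] at hsum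
  have hshift : a * b / c * ₂F₁ (a + 1) (b + 1) (c + 1) x = deriv (₂F₁ a b c) x := by
    rw [← hsum.tsum_eq, tsum_mul_left]
    simp only [ordinaryHypergeometric_eq_tsum, smul_eq_mul]
  exact hshift ▸ hdiff.hasDerivAt

end UnitDisc

section Boundary

variable (a b : ℝ) {c : ℝ}

lemma summable_abs_ordinaryHypergeometricCoefficient (hs : 0 < c - a - b) :
    Summable fun n => |ordinaryHypergeometricCoefficient a b c n| := by
  set s := c - a - b
  set u := ordinaryHypergeometricCoefficient a b c
  -- Raabe's test: `s / 2 * |u n| ≤ n * |u n| - (n + 1) * |u (n + 1)|` for large `n`.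
  refine (summable_mul_left_iff (half_pos hs).ne').1 ?_
  refine summable_of_eventually_le_sub_succ (g := fun n : ℕ => n * |u n|)
    (fun n => by positivity) (fun n => by positivity) ?_
  have htop := tendsto_natCast_atTop_atTop (R := ℝ)
  filter_upwards [htop.eventually_ge_atTop (-a), htop.eventually_ge_atTop (-b),
    htop.eventually_gt_atTop (-c),
    htop.eventually_ge_atTop ((s / 2 * c + a * b) / (s / 2))] with n ha hb hc hlarge
  have hcn : 0 < c + n := by linarith
  have hratio_nonneg : 0 ≤ (a + n) * (b + n) / (c + n) := by
    have := mul_nonneg (neg_le_iff_add_nonneg'.1 ha) (neg_le_iff_add_nonneg'.1 hb)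
    positivity
  have hratio_le : (a + n) * (b + n) / (c + n) ≤ n - s / 2 := by
    rw [div_le_iff₀ (half_pos hs)] at hlarge
    rw [div_le_iff₀ hcn]
    linear_combination hlarge
  have hsucc : ((n + 1 : ℕ) : ℝ) * |u (n + 1)| = |u n| * ((a + n) * (b + n) / (c + n)) := by
    have h := congrArg abs (ordinaryHypergeometricCoefficient_succ a b n c)
    rwa [abs_mul, abs_mul (ordinaryHypergeometricCoefficient a b c n),
      abs_of_nonneg hratio_nonneg, ← Nat.cast_add_one, Nat.abs_cast] at h
  rw [hsucc]
  linear_combination |u n| * hratio_le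

lemma hasSum_ordinaryHypergeometric_one (hs : 0 < c - a - b) :
    HasSum (ordinaryHypergeometricCoefficient a b c) (₂F₁ a b c (1 : ℝ)) := by
  simpa only [ordinaryHypergeometric_eq_tsum, one_pow, smul_eq_mul, mul_one] using
    (summable_abs_ordinaryHypergeometricCoefficient a b hs).of_abs.hasSum

lemma continuousOn_ordinaryHypergeometric (hs : 0 < c - a - b) :
    ContinuousOn (₂F₁ a b c) (Icc (-1 : ℝ) 1) := by
  rw [ordinaryHypergeometric_eq_tsum]
  refine continuousOn_tsum (fun n => by fun_prop)
    (summable_abs_ordinaryHypergeometricCoefficient a b hs) fun n x hx => ?_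
  rw [smul_eq_mul, norm_mul, norm_pow]
  exact mul_le_of_le_one_right (abs_nonneg _) (pow_le_one₀ (norm_nonneg x) (abs_le.2 hx))

end Boundary

section GaussSummation

variable (a b : ℝ) {c : ℝ}

lemma ordinaryHypergeometric_one_contiguous (hc : ∀ k : ℕ, c ≠ -k) (hs : 0 < c - a - b) :
    (c - a - b) * ₂F₁ a b c (1 : ℝ) = (c - a) * (c - b) / c * ₂F₁ a b (c + 1) (1 : ℝ) := by
  set u := ordinaryHypergeometricCoefficient a b c
  have hsum := ((hasSum_ordinaryHypergeometric_one a b hs).mul_left (c - a - b)).sub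
    ((hasSum_ordinaryHypergeometric_one a b (c := c + 1) (by linarith)).mul_left
      ((c - a) * (c - b) / c))
  simp only [ordinaryHypergeometricCoefficient_telescope a b _ hc] at hsum
  have hpartial (m : ℕ) :
      ∑ n ∈ Finset.range m, (n * u n - (n + 1) * u (n + 1)) = -(m * u m) := by
    simpa using Finset.sum_range_sub' (fun n : ℕ => (n : ℝ) * u n) m
  have hlim := hsum.tendsto_sum_nat.neg
  simp only [u, hpartial, neg_neg] at hlim
  exact sub_eq_zero.1 <| neg_eq_zero.1 <| eq_zero_of_summable_of_tendsto_natCast_mul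
    (hasSum_ordinaryHypergeometric_one a b hs).summable hlim

lemma ordinaryHypergeometric_one_contiguous_iterate (hc : ∀ k : ℕ, c ≠ -k) (hs : 0 < c - a - b)
    (N : ℕ) :
    (ascPochhammer ℝ N).eval c * (ascPochhammer ℝ N).eval (c - a - b) * ₂F₁ a b c (1 : ℝ) =
      (ascPochhammer ℝ N).eval (c - a) * (ascPochhammer ℝ N).eval (c - b) *
        ₂F₁ a b (c + N) (1 : ℝ) := by
  induction N with
  | zero => simp
  | succ N ih =>
    have hcN : c + N ≠ 0 := fun h => hc N (eq_neg_of_add_eq_zero_left h)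
    have hpole (k : ℕ) : c + N ≠ -k := fun h => hc (N + k) (by push_cast; linarith)
    have hstep : (c + N) * ((c + N - a - b) * ₂F₁ a b (c + N) (1 : ℝ)) =
        (c + N - a) * (c + N - b) * ₂F₁ a b (c + N + 1) (1 : ℝ) := by
      rw [ordinaryHypergeometric_one_contiguous a b hpole (by linarith [N.cast_nonneg (α := ℝ)])]
      field_simp
    simp only [ascPochhammer_succ_eval, Nat.cast_add_one, ← add_assoc]
    linear_combination (c + N) * (c - a - b + N) * ih +
      (ascPochhammer ℝ N).eval (c - a) * (ascPochhammer ℝ N).eval (c - b) * hstep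

lemma tendsto_ordinaryHypergeometricCoefficient_atTop (n : ℕ) :
    Tendsto (fun c => ordinaryHypergeometricCoefficient a b c n) atTop
      (𝓝 (Pi.single (M := fun _ => ℝ) 0 1 n)) := by
  cases n with
  | zero => simp [ordinaryHypergeometricCoefficient]
  | succ n =>
    have hdeg : 0 < (ascPochhammer ℝ (n + 1)).degree :=
      Polynomial.natDegree_pos_iff_degree_pos.1 (by simp [ascPochhammer_natDegree])
    have htop := Polynomial.tendsto_atTop_of_leadingCoeff_nonneg _ hdeg
      (by simp [(monic_ascPochhammer ℝ (n + 1)).leadingCoeff])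
    simpa using (tendsto_inv_atTop_zero.comp htop).const_mul _

lemma tendsto_ordinaryHypergeometric_one_atTop :
    Tendsto (fun c => ₂F₁ a b c (1 : ℝ)) atTop (𝓝 1) := by
  set c₀ := max 1 (a + b + 1)
  have hc₀ : 0 < c₀ := one_pos.trans_le (le_max_left _ _)
  have hsummable : Summable fun n => |ordinaryHypergeometricCoefficient a b c₀ n| :=
    summable_abs_ordinaryHypergeometricCoefficient a b
      (by linarith [le_max_right 1 (a + b + 1)])
  have hlim := tendsto_tsum_of_dominated_convergence hsummable
    (tendsto_ordinaryHypergeometricCoefficient_atTop a b) <| by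
      filter_upwards [eventually_ge_atTop c₀] with c hc n
      have hmono := monotoneOn_ascPochhammer_eval n hc₀ (hc₀.trans_le hc) hc
      have hpos := ascPochhammer_pos n c₀ hc₀
      simp only [ordinaryHypergeometricCoefficient, norm_mul, abs_mul, norm_inv, abs_inv,
        Real.norm_eq_abs]
      gcongr
  simpa only [ordinaryHypergeometric_eq_tsum, one_pow, smul_eq_mul, mul_one, tsum_pi_single] using
    hlim

lemma GammaSeq_eq_div_ascPochhammer_eval (x : ℝ) (n : ℕ) :
    Real.GammaSeq x n = n ^ x * n.factorial / (ascPochhammer ℝ (n + 1)).eval x := by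
  rw [Real.GammaSeq, ascPochhammer_eval_eq_prod_range]

lemma tendsto_inv_GammaSeq (x : ℝ) :
    Tendsto (fun n => (Real.GammaSeq x n)⁻¹) atTop (𝓝 (Real.Gamma x)⁻¹) := by
  by_cases hx : Real.Gamma x = 0
  · obtain ⟨m, rfl⟩ := (Real.Gamma_eq_zero_iff x).1 hx
    refine tendsto_const_nhds.congr' ?_
    filter_upwards [eventually_ge_atTop m] with n hn
    rw [hx, GammaSeq_eq_div_ascPochhammer_eval,
      ascPochhammer_eval_neg_coe_nat_of_lt (Nat.lt_succ_of_le hn), div_zero]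
  · exact (Real.GammaSeq_tendsto_Gamma x).inv₀ hx

/-- When `c - a` or `c - b` is a pole of `Γ`, both sides are `0`: Mathlib's `Real.Gamma` vanishes at
its poles, and division by `0` then gives the classical value `0` of `1 / Γ`. -/
theorem ordinaryHypergeometric_one (hc : ∀ k : ℕ, c ≠ -k) (hs : 0 < c - a - b) :
    ₂F₁ a b c (1 : ℝ) = Real.Gamma c * Real.Gamma (c - a - b) /
      (Real.Gamma (c - a) * Real.Gamma (c - b)) := by
  have hGamma := ((Real.GammaSeq_tendsto_Gamma c).mul
    (Real.GammaSeq_tendsto_Gamma (c - a - b))).mul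
    ((tendsto_inv_GammaSeq (c - a)).mul (tendsto_inv_GammaSeq (c - b)))
  have hF : Tendsto (fun n : ℕ => ₂F₁ a b (c + (n + 1 : ℕ)) (1 : ℝ)) atTop (𝓝 1) :=
    (tendsto_ordinaryHypergeometric_one_atTop a b).comp <|
      tendsto_atTop_add_const_left _ c <|
        tendsto_natCast_atTop_atTop.comp (tendsto_add_atTop_nat 1)
  have hlim := hGamma.mul hF
  rw [mul_one, ← mul_inv, ← div_eq_mul_inv] at hlim
  refine tendsto_nhds_unique (tendsto_const_nhds.congr' ?_) hlim
  filter_upwards [eventually_gt_atTop 0] with n hn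
  have hn' : (0 : ℝ) < n := Nat.cast_pos.2 hn
  have hc_ne : (ascPochhammer ℝ (n + 1)).eval c ≠ 0 := ascPochhammer_eval_ne_zero hc _
  have hs_ne : (ascPochhammer ℝ (n + 1)).eval (c - a - b) ≠ 0 := (ascPochhammer_pos _ _ hs).ne'
  have hpow : (n : ℝ) ^ c * (n : ℝ) ^ (c - a - b) = (n : ℝ) ^ (c - a) * (n : ℝ) ^ (c - b) := by
    rw [← Real.rpow_add hn', ← Real.rpow_add hn']
    ring_nf
  have hiterate := ordinaryHypergeometric_one_contiguous_iterate a b hc hs (n + 1)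
  have hpow_pos (x : ℝ) : (n : ℝ) ^ x ≠ 0 := (Real.rpow_pos_of_pos hn' x).ne'
  have hca := hpow_pos (c - a)
  have hcb := hpow_pos (c - b)
  have hfact : (n.factorial : ℝ) ≠ 0 := Nat.cast_ne_zero.2 n.factorial_ne_zero
  simp only [GammaSeq_eq_div_ascPochhammer_eval, inv_div]
  field_simp
  linear_combination (n : ℝ) ^ (c - a) * (n : ℝ) ^ (c - b) * hiterate -
    (ascPochhammer ℝ (n + 1)).eval (c - a) * (ascPochhammer ℝ (n + 1)).eval (c - b) *
      ₂F₁ a b (c + (n + 1 : ℕ)) (1 : ℝ) * hpow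

theorem ordinaryHypergeometric_one_shift (hc : ∀ k : ℕ, c ≠ -k) (hs : 1 < c - a - b) :
    a * b / c * ₂F₁ (a + 1) (b + 1) (c + 1) (1 : ℝ) =
      a * b / (c - a - b - 1) * ₂F₁ a b c (1 : ℝ) := by
  have hc0 : c ≠ 0 := by simpa using hc 0
  have hs0 : c - a - b - 1 ≠ 0 := by linarith
  have hc_succ (k : ℕ) : c + 1 ≠ -k := fun h => hc (k + 1) (by push_cast; linarith)
  have hGamma : Real.Gamma (c - a - b) = (c - a - b - 1) * Real.Gamma (c - a - b - 1) := by
    rw [← Real.Gamma_add_one hs0, sub_add_cancel]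
  rw [ordinaryHypergeometric_one a b hc (by linarith),
    ordinaryHypergeometric_one (a + 1) (b + 1) hc_succ (by linarith),
    Real.Gamma_add_one hc0, hGamma,
    show c + 1 - (a + 1) = c - a by ring, show c + 1 - (b + 1) = c - b by ring,
    show c - a - (b + 1) = c - a - b - 1 by ring]
  field_simp

end GaussSummation

section Calculus

lemma contDiffOn_one_of_hasDerivWithinAt {𝕜 E : Type*} [NontriviallyNormedField 𝕜]
    [NormedAddCommGroup E] [NormedSpace 𝕜 E] {f f' : 𝕜 → E} {s : Set 𝕜} (hs : UniqueDiffOn 𝕜 s)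
    (hf : ∀ x ∈ s, HasDerivWithinAt f (f' x) s x) (hf' : ContinuousOn f' s) :
    ContDiffOn 𝕜 1 f s :=
  (contDiffOn_one_iff_derivWithin hs).2 ⟨fun x hx => (hf x hx).differentiableWithinAt,
    hf'.congr fun x hx => (hf x hx).derivWithin (hs x hx)⟩

lemma hasDerivAt_of_eventually_hasDerivAt_nhdsNE {E : Type*} [NormedAddCommGroup E]
    [NormedSpace ℝ E] {f f' : ℝ → E} {x : ℝ} (hderiv : ∀ᶠ y in 𝓝[≠] x, HasDerivAt f (f' y) y)
    (hf : ContinuousAt f x) (hf' : ContinuousAt f' x) : HasDerivAt f (f' x) x := by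
  have hdiff : DifferentiableOn ℝ f {y | HasDerivAt f (f' y) y} := fun y hy =>
    hy.differentiableAt.differentiableWithinAt
  have hlim : Tendsto (deriv f) (𝓝[≠] x) (𝓝 (f' x)) :=
    (hf'.tendsto.mono_left nhdsWithin_le_nhds).congr' (hderiv.mono fun y hy => hy.deriv.symm)
  have hright : HasDerivWithinAt f (f' x) (Ici x) x :=
    hasDerivWithinAt_Ici_of_tendsto_deriv hdiff hf.continuousWithinAt
      (nhdsGT_le_nhdsNE x hderiv) (hlim.mono_left (nhdsGT_le_nhdsNE x))
  have hleft : HasDerivWithinAt f (f' x) (Iic x) x :=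
    hasDerivWithinAt_Iic_of_tendsto_deriv hdiff hf.continuousWithinAt
      (nhdsLT_le_nhdsNE x hderiv) (hlim.mono_left (nhdsLT_le_nhdsNE x))
  simpa only [Iic_union_Ici, hasDerivWithinAt_univ] using hleft.union hright

end Calculus

section InversionGlue

/-- The function equal to `G` on `(-∞, 1]` and to the Kelvin-type transform `x ^ k * H (1 / x)` of
`H` on `(1, ∞)`. The function `ψ_γ` is of this form, with `G = H`, and so is its derivative. -/
noncomputable def inversionGlue (k : ℝ) (G H : ℝ → ℝ) (x : ℝ) : ℝ :=
  if x ≤ 1 then G x else x ^ k * H x⁻¹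

variable {k x : ℝ} {G H G' H' : ℝ → ℝ}

lemma inversionGlue_of_le_one (hx : x ≤ 1) : inversionGlue k G H x = G x :=
  if_pos hx

lemma inversionGlue_of_one_lt (hx : 1 < x) : inversionGlue k G H x = x ^ k * H x⁻¹ :=
  if_neg hx.not_ge

lemma continuousOn_inversionGlue (hG : ContinuousOn G (Icc 0 1)) (hH : ContinuousOn H (Icc 0 1))
    (hGH : G 1 = H 1) : ContinuousOn (inversionGlue k G H) (Ici 0) := by
  refine ContinuousOn.if ?_ ?_ ?_
  · rintro x ⟨-, hx⟩
    obtain rfl : x = 1 := by simpa [Iic_def] using hx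
    simpa using hGH
  · refine hG.mono fun x hx => ⟨hx.1, ?_⟩
    simpa [Iic_def] using hx.2
  · have hx_ge {x : ℝ} (hx : x ∈ Ici 0 ∩ closure {y : ℝ | ¬y ≤ 1}) : 1 ≤ x := by
      simpa [not_le, Ioi_def] using hx.2
    have hx_ne {x : ℝ} (hx : x ∈ Ici 0 ∩ closure {y : ℝ | ¬y ≤ 1}) : x ≠ 0 :=
      (one_pos.trans_le (hx_ge hx)).ne'
    refine (continuousOn_id.rpow_const fun x hx => Or.inl (hx_ne hx)).mul
      (hH.comp (continuousOn_inv₀.mono fun x hx => hx_ne hx) fun x hx => ?_)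
    exact ⟨inv_nonneg.2 hx.1, inv_le_one_of_one_le₀ (hx_ge hx)⟩

lemma hasDerivAt_inversionGlue_of_ne_one (hG : ∀ y ∈ Ico 0 1, HasDerivAt G (G' y) y)
    (hH : ∀ y ∈ Ioo 0 1, HasDerivAt H (H' y) y) (hx : 0 ≤ x) (hx1 : x ≠ 1) :
    HasDerivAt (inversionGlue k G H)
      (inversionGlue (k - 1) G' (fun y => k * H y - y * H' y) x) x := by
  rcases hx1.lt_or_gt with hlt | hgt
  · rw [inversionGlue_of_le_one hlt.le]
    refine (hG x ⟨hx, hlt⟩).congr_of_eventuallyEq ?_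
    filter_upwards [Iio_mem_nhds hlt] with y hy using inversionGlue_of_le_one hy.le
  · have hx0 : 0 < x := one_pos.trans hgt
    have hinv : HasDerivAt (fun y => H y⁻¹) (H' x⁻¹ * -(x ^ 2)⁻¹) x :=
      (hH x⁻¹ ⟨inv_pos.2 hx0, inv_lt_one_of_one_lt₀ hgt⟩).comp x (hasDerivAt_inv hx0.ne')
    have hmul := (Real.hasDerivAt_rpow_const (p := k) (Or.inl hx0.ne')).mul hinv
    rw [inversionGlue_of_one_lt hgt]
    refine (hmul.congr_of_eventuallyEq ?_).congr_deriv ?_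
    · filter_upwards [Ioi_mem_nhds hgt] with y hy using inversionGlue_of_one_lt hy
    · rw [Real.rpow_sub_one hx0.ne']
      field_simp
      ring

lemma hasDerivAt_inversionGlue (hG : ∀ y ∈ Ico 0 1, HasDerivAt G (G' y) y)
    (hH : ∀ y ∈ Ioo 0 1, HasDerivAt H (H' y) y)
    (hcont : ContinuousOn (inversionGlue k G H) (Ici 0))
    (hcont' : ContinuousOn (inversionGlue (k - 1) G' fun y => k * H y - y * H' y) (Ici 0))
    (hx : 0 ≤ x) :
    HasDerivAt (inversionGlue k G H)
      (inversionGlue (k - 1) G' (fun y => k * H y - y * H' y) x) x := by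
  rcases eq_or_ne x 1 with rfl | hx1
  · have hnhds : Ici (0 : ℝ) ∈ 𝓝 1 := Ici_mem_nhds one_pos
    refine hasDerivAt_of_eventually_hasDerivAt_nhdsNE ?_ (hcont.continuousAt hnhds)
      (hcont'.continuousAt hnhds)
    filter_upwards [mem_nhdsWithin_of_mem_nhds hnhds, self_mem_nhdsWithin] with y hy hy1
    exact hasDerivAt_inversionGlue_of_ne_one hG hH hy hy1
  · exact hasDerivAt_inversionGlue_of_ne_one hG hH hx hx1

theorem contDiffOn_inversionGlue_self (hcont : ContinuousOn G (Icc 0 1))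
    (hcont' : ContinuousOn G' (Icc 0 1)) (hG : ∀ y ∈ Ico 0 1, HasDerivAt G (G' y) y)
    (hmatch : 2 * G' 1 = k * G 1) :
    ContDiffOn ℝ 1 (inversionGlue k G G) (Ici 0) ∧ HasDerivAt (inversionGlue k G G) (G' 1) 1 := by
  have hglue := continuousOn_inversionGlue (k := k) hcont hcont rfl
  have hglue' : ContinuousOn (inversionGlue (k - 1) G' fun y => k * G y - y * G' y) (Ici 0) :=
    continuousOn_inversionGlue hcont' (by fun_prop) (by linarith)
  have hderiv {x : ℝ} (hx : 0 ≤ x) :=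
    hasDerivAt_inversionGlue hG (fun y hy => hG y ⟨hy.1.le, hy.2⟩) hglue hglue' hx
  refine ⟨contDiffOn_one_of_hasDerivWithinAt (uniqueDiffOn_Ici 0)
    (fun x hx => (hderiv hx).hasDerivWithinAt) hglue', ?_⟩
  simpa only [inversionGlue_of_le_one le_rfl] using hderiv zero_le_one

end InversionGlue

lemma ordinaryHypergeometric_one_shift_of_wellPoised {a b c : ℝ} (hc : ∀ k : ℕ, c ≠ -k)
    (hb : b < 0) (habc : c = a - b + 1) :
    a * b / c * ₂F₁ (a + 1) (b + 1) (c + 1) (1 : ℝ) = -a / 2 * ₂F₁ a b c (1 : ℝ) := by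
  have hexcess : c - a - b - 1 = -2 * b := by rw [habc]; ring
  rw [ordinaryHypergeometric_one_shift a b hc (by linarith), hexcess]
  have := hb.ne
  field_simp

theorem contDiffOn_inversionGlue_ordinaryHypergeometric {a b c : ℝ} (hc : ∀ k : ℕ, c ≠ -k)
    (hb : b < 0) (habc : c = a - b + 1) :
    ContDiffOn ℝ 1 (inversionGlue (-a) (₂F₁ a b c) (₂F₁ a b c)) (Ici 0) ∧
      HasDerivAt (inversionGlue (-a) (₂F₁ a b c) (₂F₁ a b c)) (-a / 2 * ₂F₁ a b c (1 : ℝ)) 1 := by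
  have hshift := ordinaryHypergeometric_one_shift_of_wellPoised hc hb habc
  have hIcc : Icc (0 : ℝ) 1 ⊆ Icc (-1) 1 := Icc_subset_Icc_left (by norm_num)
  rw [← hshift]
  refine contDiffOn_inversionGlue_self
    (G' := fun x => a * b / c * ₂F₁ (a + 1) (b + 1) (c + 1) x) ?_ ?_ ?_ ?_
  · exact (continuousOn_ordinaryHypergeometric a b (by linarith)).mono hIcc
  · have hcont := continuousOn_ordinaryHypergeometric (a + 1) (b + 1) (c := c + 1) (by linarith)
    exact (hcont.mono hIcc).const_mul _
  · intro y hy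
    exact hasDerivAt_ordinaryHypergeometric a b c (abs_lt.2 ⟨by linarith [hy.1], hy.2⟩)
  · simp only [hshift]
    ring

lemma hyperF_eq_ordinaryHypergeometric (a b c : ℝ) : hyperF a b c = ₂F₁ a b c := by
  ext z
  rw [ordinaryHypergeometric_eq_tsum, hyperF]
  refine tsum_congr fun n => ?_
  simp only [poch, ← ascPochhammer_eval_eq_prod_range, smul_eq_mul]
  field_simp

lemma Gamma_add_one_div_Gamma_half_add_one {x : ℝ} (hx : x ≠ 0) :
    Real.Gamma (x + 1) / Real.Gamma (x / 2 + 1) = 2 * (Real.Gamma x / Real.Gamma (x / 2)) := by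
  rw [Real.Gamma_add_one hx, Real.Gamma_add_one (by simpa using hx)]
  field_simp

theorem psi_C1_extension_general {d γ : ℝ} (hd : 0 < d) (hγ : 2 < d + γ) :
    ∃ ψ : ℝ → ℝ,
      (∀ ρ ∈ Set.Ico (0 : ℝ) 1,
        ψ ρ = hyperF (-γ / 2) ((2 - γ - d) / 2) (d / 2) ρ) ∧
      (∀ ρ : ℝ, 1 < ρ →
        ψ ρ = ρ ^ (γ / 2) * hyperF (-γ / 2) ((2 - γ - d) / 2) (d / 2) ρ⁻¹) ∧
      ContDiffOn ℝ 1 ψ (Set.Ici 0) ∧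
      ψ 1 = Real.Gamma (d / 2) * Real.Gamma (d + γ - 1) /
        (Real.Gamma ((d + γ) / 2) * Real.Gamma ((2 * d + γ - 2) / 2)) ∧
      deriv ψ 1 = γ / 2 * (Real.Gamma (d / 2) * Real.Gamma (d + γ - 2) /
        (Real.Gamma ((d + γ - 2) / 2) * Real.Gamma ((2 * d + γ - 2) / 2))) := by
  have hpole (k : ℕ) : d / 2 ≠ -k := by linarith [k.cast_nonneg (α := ℝ)]
  obtain ⟨hsmooth, hderiv⟩ := contDiffOn_inversionGlue_ordinaryHypergeometric
    (a := -γ / 2) (b := (2 - γ - d) / 2) hpole (by linarith) (by ring)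
  rw [show -(-γ / 2) = γ / 2 by ring] at hsmooth hderiv
  have hvalue := ordinaryHypergeometric_one (-γ / 2) ((2 - γ - d) / 2) hpole (by linarith)
  rw [show d / 2 - -γ / 2 - (2 - γ - d) / 2 = d + γ - 1 by ring,
    show d / 2 - -γ / 2 = (d + γ) / 2 by ring,
    show d / 2 - (2 - γ - d) / 2 = (2 * d + γ - 2) / 2 by ring] at hvalue
  rw [hyperF_eq_ordinaryHypergeometric]
  refine ⟨_, fun ρ hρ => inversionGlue_of_le_one hρ.2.le, fun ρ hρ => inversionGlue_of_one_lt hρ,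
    hsmooth, (inversionGlue_of_le_one le_rfl).trans hvalue, ?_⟩
  have hGamma := Gamma_add_one_div_Gamma_half_add_one (x := d + γ - 2) (by linarith)
  rw [show d + γ - 2 + 1 = d + γ - 1 by ring,
    show (d + γ - 2) / 2 + 1 = (d + γ) / 2 by ring] at hGamma
  rw [hderiv.deriv, hvalue]
  linear_combination γ / 4 * (Real.Gamma (d / 2) / Real.Gamma ((2 * d + γ - 2) / 2)) * hGamma

theorem psi_C1_extension (d : ℕ) (hd : 2 ≤ d) (γ : ℝ) (hγ : 2 < (d : ℝ) + γ) :
    ∃ ψ : ℝ → ℝ,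
      (∀ ρ ∈ Set.Ico (0 : ℝ) 1,
        ψ ρ = hyperF (-γ / 2) ((2 - γ - (d : ℝ)) / 2) ((d : ℝ) / 2) ρ) ∧
      (∀ ρ : ℝ, 1 < ρ →
        ψ ρ = ρ ^ (γ / 2) * hyperF (-γ / 2) ((2 - γ - (d : ℝ)) / 2) ((d : ℝ) / 2) ρ⁻¹) ∧
      ContDiffOn ℝ 1 ψ (Set.Ici 0) ∧
      ψ 1 = Real.Gamma ((d : ℝ) / 2) * Real.Gamma ((d : ℝ) + γ - 1) /
        (Real.Gamma (((d : ℝ) + γ) / 2) * Real.Gamma ((2 * (d : ℝ) + γ - 2) / 2)) ∧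
      deriv ψ 1 = γ / 2 * (Real.Gamma ((d : ℝ) / 2) * Real.Gamma ((d : ℝ) + γ - 2) /
        (Real.Gamma (((d : ℝ) + γ - 2) / 2) * Real.Gamma ((2 * (d : ℝ) + γ - 2) / 2))) :=
  psi_C1_extension_general (Nat.cast_pos.2 (two_pos.trans_le hd)) hγ
end
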